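/- arXiv:2601.13287 — 2 statements merged into one kernel-verified Lean document; each statement's English description precedes it below -/
import Mathlib

section
/- Let n be odd, q = (n−1)/2, and S_1,...,S_q ⊆ M. Consider the asymmetric envy instance where: v_{1,j}(X) = |X| for all j ≥ 2; for each i ∈ [q], agent 2i has v_{2i,1}(X) = |X ∩ S_i| and v_{2i,j}(X) = |X ∩ (M\S_i)| for j ∉ {1, 2i}; agent 2i+1 has v_{2i+1,1}(X) = |X ∩ (M\S_i)| and v_{2i+1,j}(X) = |X ∩ S_i| for j ∉ {1, 2i+1}. If a partition M = A_1 ⊔ ... ⊔ A_n is EF_a-c for an integer c ≥ 1, then for every i ∈ [q], | |S_i ∩ A_1| − |S_i|/n | ≤ 6c. -/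
open Finset

lemma ef_card {α : Type*} [DecidableEq α] (B C P T : Finset α) (c : ℕ) (hP : P.card ≤ c)
    (h : ((B \ P) ∩ T).card ≥ ((C \ P) ∩ T).card) : (C ∩ T).card ≤ (B ∩ T).card + c := by
  have e1 : (C ∩ T).card ≤ ((C \ P) ∩ T ∪ P).card := by
    apply Finset.card_le_card
    intro x hx
    simp only [mem_union, mem_inter, mem_sdiff] at *
    tauto
  have e2 := Finset.card_union_le ((C \ P) ∩ T) P
  have e3 : ((B \ P) ∩ T).card ≤ (B ∩ T).card :=
    Finset.card_le_card (Finset.inter_subset_inter_right Finset.sdiff_subset)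
  omega

/-- Lower-bound instance: with agent `0` counting all items, agent `2i+1`
(resp. `2i+2`) counting `S i` toward agent `0` and its complement toward
everyone else (resp. symmetrically), any EF_a-c allocation satisfies
`||S_i ∩ A_0| - |S_i|/n| ≤ 6c` for every `i`. -/
theorem lower_bound_instance {α : Type*} [DecidableEq α] {n q : ℕ}
    (hodd : Odd n) (hn : n = 2 * q + 1)
    (M : Finset α) (S : Fin q → Finset α) (hSM : ∀ i, S i ⊆ M)
    (vv : Fin n → Fin n → Finset α → ℕ)
    (h1 : ∀ j : Fin n, j ≠ ⟨0, by omega⟩ → ∀ X : Finset α, vv ⟨0, by omega⟩ j X = X.card)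
    (h2a : ∀ i : Fin q, ∀ X : Finset α,
      vv ⟨2 * (i : ℕ) + 1, by have := i.isLt; omega⟩ ⟨0, by omega⟩ X = (X ∩ S i).card)
    (h2b : ∀ i : Fin q, ∀ j : Fin n, j ≠ ⟨0, by omega⟩ →
      j ≠ ⟨2 * (i : ℕ) + 1, by have := i.isLt; omega⟩ → ∀ X : Finset α,
      vv ⟨2 * (i : ℕ) + 1, by have := i.isLt; omega⟩ j X = (X ∩ (M \ S i)).card)
    (h3a : ∀ i : Fin q, ∀ X : Finset α,
      vv ⟨2 * (i : ℕ) + 2, by have := i.isLt; omega⟩ ⟨0, by omega⟩ X = (X ∩ (M \ S i)).card)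
    (h3b : ∀ i : Fin q, ∀ j : Fin n, j ≠ ⟨0, by omega⟩ →
      j ≠ ⟨2 * (i : ℕ) + 2, by have := i.isLt; omega⟩ → ∀ X : Finset α,
      vv ⟨2 * (i : ℕ) + 2, by have := i.isLt; omega⟩ j X = (X ∩ S i).card)
    (A : Fin n → Finset α)
    (hdisj : ∀ i j : Fin n, i ≠ j → Disjoint (A i) (A j))
    (hcover : Finset.univ.biUnion A = M)
    (c : ℕ) (hc : 1 ≤ c)
    (hEF : ∀ i j : Fin n, i ≠ j → ∃ P : Finset α, P ⊆ A i ∪ A j ∧ P.card ≤ c ∧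
      vv i j (A i \ P) ≥ vv i j (A j \ P)) :
    ∀ i : Fin q,
      |((S i ∩ A ⟨0, by omega⟩).card : ℝ) - ((S i).card : ℝ) / n| ≤ 6 * c := by
  have hAM : ∀ j, A j ⊆ M := fun j => by
    rw [← hcover]; exact Finset.subset_biUnion_of_mem A (Finset.mem_univ j)
  have hsplit : ∀ (k : Fin q) (j : Fin n),
      (A j).card = (A j ∩ S k).card + (A j ∩ (M \ S k)).card := by
    intro k j
    rw [← Finset.card_inter_add_card_sdiff (A j) (S k)]
    congr 2
    ext x
    have := @hAM j x
    simp only [mem_inter, mem_sdiff]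
    tauto
  have g1 : ∀ j : Fin n, (A j).card ≤ (A ⟨0, by omega⟩).card + c := by
    intro j
    by_cases hj : j = ⟨0, by omega⟩
    · subst hj; omega
    obtain ⟨P, -, hP, h⟩ := hEF ⟨0, by omega⟩ j (Ne.symm hj)
    rw [h1 j hj, h1 j hj] at h
    have := ef_card (A ⟨0, by omega⟩) (A j) P M c hP (by
      rwa [Finset.inter_eq_left.2 (sdiff_subset.trans (hAM _)),
        Finset.inter_eq_left.2 (sdiff_subset.trans (hAM _))])
    rwa [Finset.inter_eq_left.2 (hAM _), Finset.inter_eq_left.2 (hAM _)] at this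
  have g2 : ∀ k : Fin q, (A ⟨0, by omega⟩ ∩ S k).card ≤
      (A ⟨2 * (k : ℕ) + 1, by have := k.isLt; omega⟩ ∩ S k).card + c := by
    intro k
    obtain ⟨P, -, hP, h⟩ := hEF ⟨2 * (k : ℕ) + 1, by have := k.isLt; omega⟩ ⟨0, by omega⟩
      (by simp [Fin.ext_iff])
    rw [h2a, h2a] at h
    exact ef_card _ _ P _ c hP h
  have g4 : ∀ k : Fin q, (A ⟨0, by omega⟩ ∩ (M \ S k)).card ≤
      (A ⟨2 * (k : ℕ) + 2, by have := k.isLt; omega⟩ ∩ (M \ S k)).card + c := by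
    intro k
    obtain ⟨P, -, hP, h⟩ := hEF ⟨2 * (k : ℕ) + 2, by have := k.isLt; omega⟩ ⟨0, by omega⟩
      (by simp [Fin.ext_iff])
    rw [h3a, h3a] at h
    exact ef_card _ _ P _ c hP h
  have g3 : ∀ k : Fin q, ∀ j : Fin n, j ≠ ⟨0, by omega⟩ → (A j ∩ (M \ S k)).card ≤
      (A ⟨2 * (k : ℕ) + 1, by have := k.isLt; omega⟩ ∩ (M \ S k)).card + c := by
    intro k j hj
    by_cases hj' : j = ⟨2 * (k : ℕ) + 1, by have := k.isLt; omega⟩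
    · subst hj'; omega
    obtain ⟨P, -, hP, h⟩ := hEF ⟨2 * (k : ℕ) + 1, by have := k.isLt; omega⟩ j (Ne.symm hj')
    rw [h2b k j hj hj', h2b k j hj hj'] at h
    exact ef_card _ _ P _ c hP h
  have g5 : ∀ k : Fin q, ∀ j : Fin n, j ≠ ⟨0, by omega⟩ → (A j ∩ S k).card ≤
      (A ⟨2 * (k : ℕ) + 2, by have := k.isLt; omega⟩ ∩ S k).card + c := by
    intro k j hj
    by_cases hj' : j = ⟨2 * (k : ℕ) + 2, by have := k.isLt; omega⟩
    · subst hj'; omega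
    obtain ⟨P, -, hP, h⟩ := hEF ⟨2 * (k : ℕ) + 2, by have := k.isLt; omega⟩ j (Ne.symm hj')
    rw [h3b k j hj hj', h3b k j hj hj'] at h
    exact ef_card _ _ P _ c hP h
  -- every bundle is nearly as large as bundle 0
  have g6 : ∀ j : Fin n, (A ⟨0, by omega⟩).card ≤ (A j).card + 3 * c := by
    intro j
    by_cases hj : j = ⟨0, by omega⟩
    · subst hj; omega
    have hj0 : (j : ℕ) ≠ 0 := fun h => hj (Fin.ext h)
    have hjn := j.isLt
    obtain ⟨k, hk⟩ : ∃ k : Fin q, (j : ℕ) = 2 * k + 1 ∨ (j : ℕ) = 2 * k + 2 :=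
      ⟨⟨((j : ℕ) - 1) / 2, by omega⟩, by simp only; omega⟩
    have a0 := hsplit k ⟨0, by omega⟩
    have aj := hsplit k j
    have b2 := g2 k
    have b4 := g4 k
    rcases hk with hk | hk
    · have hjk : j = ⟨2 * (k : ℕ) + 1, by have := k.isLt; omega⟩ := Fin.ext hk
      rw [hjk] at aj ⊢
      have b3 := g3 k ⟨2 * (k : ℕ) + 2, by have := k.isLt; omega⟩ (by simp [Fin.ext_iff])
      omega
    · have hjk : j = ⟨2 * (k : ℕ) + 2, by have := k.isLt; omega⟩ := Fin.ext hk
      rw [hjk] at aj ⊢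
      have b5 := g5 k ⟨2 * (k : ℕ) + 1, by have := k.isLt; omega⟩ (by simp [Fin.ext_iff])
      omega
  intro i
  have key : ∀ j : Fin n, (A j ∩ S i).card ≤ (A ⟨0, by omega⟩ ∩ S i).card + 6 * c ∧
      (A ⟨0, by omega⟩ ∩ S i).card ≤ (A j ∩ S i).card + 6 * c := by
    intro j
    by_cases hj : j = ⟨0, by omega⟩
    · subst hj; omega
    have a0 := hsplit i ⟨0, by omega⟩
    have aj := hsplit i j
    have ap := hsplit i ⟨2 * (i : ℕ) + 1, by have := i.isLt; omega⟩
    have ar := hsplit i ⟨2 * (i : ℕ) + 2, by have := i.isLt; omega⟩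
    have b1 := g1 ⟨2 * (i : ℕ) + 1, by have := i.isLt; omega⟩
    have b1' := g1 ⟨2 * (i : ℕ) + 2, by have := i.isLt; omega⟩
    have b2 := g2 i
    have b4 := g4 i
    have b3 := g3 i j hj
    have b5 := g5 i j hj
    have b6 := g6 j
    omega
  have hsum : (S i).card = ∑ j, (A j ∩ S i).card := by
    rw [← Finset.card_biUnion]
    · congr 1
      rw [← Finset.biUnion_inter, hcover]
      exact (Finset.inter_eq_right.2 (hSM i)).symm
    · intro x _ y _ hxy
      exact (hdisj x y hxy).mono Finset.inter_subset_left Finset.inter_subset_left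
  have u1 : (S i).card ≤ n * ((A ⟨0, by omega⟩ ∩ S i).card + 6 * c) := by
    rw [hsum]
    simpa using Finset.sum_le_card_nsmul Finset.univ (fun j => (A j ∩ S i).card) _
      (fun j _ => (key j).1)
  have u2 : n * (A ⟨0, by omega⟩ ∩ S i).card ≤ (S i).card + n * (6 * c) := by
    rw [hsum]
    have := Finset.sum_le_sum (s := Finset.univ) (fun j _ => (key j).2)
    simpa [Finset.sum_add_distrib] using this
  have npos : (0 : ℝ) < n := by
    have : 0 < n := by omega
    exact_mod_cast this
  rw [Finset.inter_comm (S i)]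
  have v1 : ((S i).card : ℝ) ≤ n * ((A ⟨0, by omega⟩ ∩ S i).card + 6 * c) := by exact_mod_cast u1
  have v2 : (n : ℝ) * (A ⟨0, by omega⟩ ∩ S i).card ≤ (S i).card + n * (6 * c) := by
    exact_mod_cast u2
  have w1 := (div_le_iff₀' npos).2 v1
  have w2 : ((A ⟨0, by omega⟩ ∩ S i).card : ℝ) - 6 * c ≤ ((S i).card : ℝ) / n := by
    rw [le_div_iff₀' npos]; linarith
  rw [abs_le]
  constructor <;> linarith
end

section
/- Let n be odd, q = (n−1)/2, and let S_1,...,S_q ⊆ M define binary additive valuations v^{S_i}(X) = |X ∩ S_i|. If the associated asymmetric envy instance (as constructed in the lower bound: agent 1 counts all items toward everyone; agents 2i, 2i+1 use S_i and its complement as described) admits an EF_a-c allocation, then the 1/n-weighted discrepancy of {v^{S_1},...,v^{S_q}} is at most 6c, i.e., there exists A ⊆ M with max_{i∈[q]} |(1/n)|S_i| − |S_i ∩ A|| ≤ 6c. -/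
open Finset

theorem ef_aux {α : Type*} [DecidableEq α] {c : ℕ} (X Y P T : Finset α) (hP : P.card ≤ c)
    (h : ((X \ P) ∩ T).card ≥ ((Y \ P) ∩ T).card) :
    (Y ∩ T).card ≤ (X ∩ T).card + c := by
  have e1 : ((X \ P) ∩ T).card ≤ (X ∩ T).card :=
    Finset.card_le_card (Finset.inter_subset_inter_right Finset.sdiff_subset)
  have e2 : (Y ∩ T).card ≤ (((Y \ P) ∩ T) ∪ P).card := by
    apply Finset.card_le_card
    intro x hx
    simp only [Finset.mem_union, Finset.mem_inter, Finset.mem_sdiff] at hx ⊢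
    tauto
  have e3 := Finset.card_union_le ((Y \ P) ∩ T) P
  omega

theorem avg_aux {n : ℕ} (hn : 0 < n) (f : Fin n → ℕ) (a c : ℕ)
    (h1 : ∀ j, f j ≤ a + c) (h2 : ∀ j, a ≤ f j + c) :
    |(1 / (n : ℝ)) * ((∑ j, f j : ℕ) : ℝ) - a| ≤ c := by
  have e1 : ∑ j, f j ≤ n * (a + c) := by
    have := Finset.sum_le_sum (fun j (_ : j ∈ Finset.univ) => h1 j)
    simpa using this
  have e2 : n * a ≤ ∑ j, f j + n * c := by
    have := Finset.sum_le_sum (fun j (_ : j ∈ Finset.univ) => h2 j)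
    simpa [Finset.sum_add_distrib] using this
  have hn' : (0 : ℝ) < n := by exact_mod_cast hn
  have e1' : ((∑ j, f j : ℕ) : ℝ) ≤ n * (a + c) := by exact_mod_cast e1
  have e2' : (n : ℝ) * a ≤ ((∑ j, f j : ℕ) : ℝ) + n * c := by exact_mod_cast e2
  have e3 : (1 / (n : ℝ)) * ((∑ j, f j : ℕ) : ℝ) - a
      = (((∑ j, f j : ℕ) : ℝ) - n * a) / n := by
    field_simp
  rw [e3, abs_le, le_div_iff₀ hn', div_le_iff₀ hn']
  constructor <;> nlinarith

/-- If the lower-bound asymmetric envy instance built from `S_1, …, S_q`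
admits an EF_a-c allocation, then the `1/n`-weighted discrepancy of the
collection `{v^{S_i}}` is at most `6c`: some set `B ⊆ M` is within `6c` of
the proportional share of each `S_i`. -/
theorem wdisc_from_efac {α : Type*} [DecidableEq α] {n q : ℕ}
    (hodd : Odd n) (hn : n = 2 * q + 1)
    (M : Finset α) (S : Fin q → Finset α) (hSM : ∀ i, S i ⊆ M)
    (vv : Fin n → Fin n → Finset α → ℕ)
    (h1 : ∀ j : Fin n, j ≠ ⟨0, by omega⟩ → ∀ X : Finset α, vv ⟨0, by omega⟩ j X = X.card)
    (h2a : ∀ i : Fin q, ∀ X : Finset α,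
      vv ⟨2 * (i : ℕ) + 1, by have := i.isLt; omega⟩ ⟨0, by omega⟩ X = (X ∩ S i).card)
    (h2b : ∀ i : Fin q, ∀ j : Fin n, j ≠ ⟨0, by omega⟩ →
      j ≠ ⟨2 * (i : ℕ) + 1, by have := i.isLt; omega⟩ → ∀ X : Finset α,
      vv ⟨2 * (i : ℕ) + 1, by have := i.isLt; omega⟩ j X = (X ∩ (M \ S i)).card)
    (h3a : ∀ i : Fin q, ∀ X : Finset α,
      vv ⟨2 * (i : ℕ) + 2, by have := i.isLt; omega⟩ ⟨0, by omega⟩ X = (X ∩ (M \ S i)).card)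
    (h3b : ∀ i : Fin q, ∀ j : Fin n, j ≠ ⟨0, by omega⟩ →
      j ≠ ⟨2 * (i : ℕ) + 2, by have := i.isLt; omega⟩ → ∀ X : Finset α,
      vv ⟨2 * (i : ℕ) + 2, by have := i.isLt; omega⟩ j X = (X ∩ S i).card)
    (c : ℕ) (hc : 1 ≤ c)
    (hEF : ∃ A : Fin n → Finset α,
      (∀ i j : Fin n, i ≠ j → Disjoint (A i) (A j)) ∧
      Finset.univ.biUnion A = M ∧
      ∀ i j : Fin n, i ≠ j → ∃ P : Finset α, P ⊆ A i ∪ A j ∧ P.card ≤ c ∧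
        vv i j (A i \ P) ≥ vv i j (A j \ P)) :
    ∃ B : Finset α, B ⊆ M ∧ ∀ i : Fin q,
      |(1 / (n : ℝ)) * ((S i).card : ℝ) - ((S i ∩ B).card : ℝ)| ≤ 6 * c := by
  obtain ⟨A, hdis, hcov, hef⟩ := hEF
  have hAM : ∀ j, A j ⊆ M := fun j => by
    rw [← hcov]; exact Finset.subset_biUnion_of_mem A (Finset.mem_univ j)
  have hn0 : 0 < n := by omega
  refine ⟨A ⟨0, hn0⟩, hAM _, ?_⟩
  have hsplit : ∀ (i : Fin q) (j : Fin n),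
      (A j ∩ S i).card + (A j ∩ (M \ S i)).card = (A j).card := by
    intro i j
    rw [← Finset.card_inter_add_card_sdiff (A j) (S i)]
    congr 2
    ext x
    have := @hAM j x
    simp only [Finset.mem_inter, Finset.mem_sdiff]
    tauto
  -- agent 0
  have k1 : ∀ j : Fin n, (A j).card ≤ (A ⟨0, hn0⟩).card + c := by
    intro j
    by_cases hj : j = ⟨0, hn0⟩
    · subst hj; omega
    obtain ⟨P, -, hP, h⟩ := hef ⟨0, hn0⟩ j (Ne.symm hj)
    rw [h1 j hj, h1 j hj] at h
    have e1 : (A ⟨0, hn0⟩ \ P).card ≤ (A ⟨0, hn0⟩).card :=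
      Finset.card_le_card Finset.sdiff_subset
    have e2 := Finset.le_card_sdiff P (A j)
    omega
  have k2a : ∀ i : Fin q, (A ⟨0, hn0⟩ ∩ S i).card
      ≤ (A ⟨2 * (i : ℕ) + 1, by have := i.isLt; omega⟩ ∩ S i).card + c := by
    intro i
    obtain ⟨P, -, hP, h⟩ := hef ⟨2 * (i : ℕ) + 1, by have := i.isLt; omega⟩ ⟨0, hn0⟩ (by simp)
    rw [h2a, h2a] at h
    exact ef_aux _ _ P _ hP h
  have k3a : ∀ i : Fin q, (A ⟨0, hn0⟩ ∩ (M \ S i)).card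
      ≤ (A ⟨2 * (i : ℕ) + 2, by have := i.isLt; omega⟩ ∩ (M \ S i)).card + c := by
    intro i
    obtain ⟨P, -, hP, h⟩ := hef ⟨2 * (i : ℕ) + 2, by have := i.isLt; omega⟩ ⟨0, hn0⟩ (by simp)
    rw [h3a, h3a] at h
    exact ef_aux _ _ P _ hP h
  have k2b : ∀ (i : Fin q) (j : Fin n), j ≠ ⟨0, hn0⟩ → (A j ∩ (M \ S i)).card
      ≤ (A ⟨2 * (i : ℕ) + 1, by have := i.isLt; omega⟩ ∩ (M \ S i)).card + c := by
    intro i j hj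
    by_cases hj' : j = ⟨2 * (i : ℕ) + 1, by have := i.isLt; omega⟩
    · subst hj'; omega
    obtain ⟨P, -, hP, h⟩ := hef ⟨2 * (i : ℕ) + 1, by have := i.isLt; omega⟩ j (Ne.symm hj')
    rw [h2b i j hj hj', h2b i j hj hj'] at h
    exact ef_aux _ _ P _ hP h
  have k3b : ∀ (i : Fin q) (j : Fin n), j ≠ ⟨0, hn0⟩ → (A j ∩ S i).card
      ≤ (A ⟨2 * (i : ℕ) + 2, by have := i.isLt; omega⟩ ∩ S i).card + c := by
    intro i j hj
    by_cases hj' : j = ⟨2 * (i : ℕ) + 2, by have := i.isLt; omega⟩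
    · subst hj'; omega
    obtain ⟨P, -, hP, h⟩ := hef ⟨2 * (i : ℕ) + 2, by have := i.isLt; omega⟩ j (Ne.symm hj')
    rw [h3b i j hj hj', h3b i j hj hj'] at h
    exact ef_aux _ _ P _ hP h
  -- every bundle is almost as large as bundle 0
  have size : ∀ j : Fin n, (A ⟨0, hn0⟩).card ≤ (A j).card + 3 * c := by
    rintro ⟨j, hj⟩
    by_cases hj0 : j = 0
    · subst hj0; omega
    have hk : (j - 1) / 2 < q := by omega
    have a1 := k2a ⟨(j - 1) / 2, hk⟩
    have a2 := k3a ⟨(j - 1) / 2, hk⟩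
    have a3 := k2b ⟨(j - 1) / 2, hk⟩ ⟨2 * ((j - 1) / 2) + 2, by omega⟩ (by simp)
    have a4 := k3b ⟨(j - 1) / 2, hk⟩ ⟨2 * ((j - 1) / 2) + 1, by omega⟩ (by simp)
    have s0 := hsplit ⟨(j - 1) / 2, hk⟩ ⟨0, hn0⟩
    have s1 := hsplit ⟨(j - 1) / 2, hk⟩ ⟨2 * ((j - 1) / 2) + 1, by omega⟩
    have s2 := hsplit ⟨(j - 1) / 2, hk⟩ ⟨2 * ((j - 1) / 2) + 2, by omega⟩
    simp only at a1 a2 a3 a4 s0 s1 s2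
    have hcase : (⟨j, hj⟩ : Fin n) = ⟨2 * ((j - 1) / 2) + 1, by omega⟩
        ∨ (⟨j, hj⟩ : Fin n) = ⟨2 * ((j - 1) / 2) + 2, by omega⟩ := by
      simp only [Fin.mk.injEq]; omega
    rcases hcase with h | h
    · rw [h]; omega
    · rw [h]; omega
  intro i
  have hsum : (S i).card = ∑ j, (A j ∩ S i).card := by
    rw [← Finset.card_biUnion]
    · rw [← Finset.biUnion_inter, hcov, Finset.inter_eq_right.mpr (hSM i)]
    · intro x _ y _ hxy
      exact (hdis x y hxy).mono Finset.inter_subset_left Finset.inter_subset_left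
  have b1 := k2a i
  have b2 := k3a i
  have b3 := k1 ⟨2 * (i : ℕ) + 1, by have := i.isLt; omega⟩
  have b4 := k1 ⟨2 * (i : ℕ) + 2, by have := i.isLt; omega⟩
  have s0 := hsplit i ⟨0, hn0⟩
  have s1 := hsplit i ⟨2 * (i : ℕ) + 1, by have := i.isLt; omega⟩
  have s2 := hsplit i ⟨2 * (i : ℕ) + 2, by have := i.isLt; omega⟩
  have key := avg_aux hn0 (fun j => (A j ∩ S i).card) (A ⟨0, hn0⟩ ∩ S i).card (6 * c)
    (by
      intro j
      by_cases hj : j = ⟨0, hn0⟩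
      · subst hj; omega
      have c1 := k3b i j hj
      omega)
    (by
      intro j
      by_cases hj : j = ⟨0, hn0⟩
      · subst hj; omega
      have c1 := k2b i j hj
      have c2 := size j
      have s3 := hsplit i j
      omega)
  rw [hsum, Finset.inter_comm (S i)]
  simpa using key
end
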